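/- Let f^L, f^R : ℝⁿ → ℝⁿ be C¹, H : ℝⁿ → ℝ be C², and suppose there is a C¹ function α : ℝⁿ → ℝ with 𝓛_{f^L}H(x) − 𝓛_{f^R}H(x) = α(x)·H(x) for all x (so the system is second-order). Write V = 𝓛_{f^L}H and define η : ℝⁿ → ℝ², η(x) = (H(x), V(x)). Let x be a point with H(x) = 0 and V(x) = 0 (i.e. x lies on the tangency surface 𝒯), and write a = 𝓛²_{f^L}H(x), b = 𝓛²_{f^R}H(x). Assume a·b < 0 (x belongs to a visible–visible or invisible–invisible region). Define λ* = (‖dη(x)[f^R(x)]‖ − ‖dη(x)[f^L(x)]‖)/(‖dη(x)[f^R(x)]‖ + ‖dη(x)[f^L(x)]‖) and the tangential sliding vector field f^tan(x) = ((1−λ*)/2)·f^R(x) + ((1+λ*)/2)·f^L(x). Then f^tan(x) = f^T(x), where f^T(x) = (f^R(x)·a − f^L(x)·b)/(a − b) is the second-order sliding vector field. -/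

import Mathlib

/-- Iterated Lie derivatives: `lieIter f h m = 𝓛_f^m h`, defined recursively by
`𝓛_f^0 h = h` and `𝓛_f^{m+1} h (x) = D(𝓛_f^m h)(x)[f(x)]`. -/
noncomputable def lieIter {n : ℕ} (f : EuclideanSpace ℝ (Fin n) → EuclideanSpace ℝ (Fin n))
    (h : EuclideanSpace ℝ (Fin n) → ℝ) : ℕ → EuclideanSpace ℝ (Fin n) → ℝ
  | 0 => h
  | m + 1 => fun x => fderiv ℝ (lieIter f h m) x (f x)

/-! On the tangency surface both fields annihilate `dH`, so `dη` maps `f^L` and `f^R` to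
`(0, dV[f^L])` and `(0, dV[f^R])`. Here `dV[f^L] = a` by definition, while `dV[f^R] = b` because
`𝓛_{f^R} H = V - α H` and the derivative of `α H` at a zero of `H` is `α dH`. Hence
`λ* = (|b| - |a|) / (|b| + |a|)`, and for `a` and `b` of opposite signs the convex weights
determined by `λ*` are `a / (a - b)` and `-b / (a - b)`. -/

open Filter Topology Asymptotics

section ConvexWeights

variable {K : Type*} [Field K] [LinearOrder K] [IsStrictOrderedRing K]

theorem abs_sub_abs_div_abs_add_abs_of_mul_neg {a b : K} (hab : a * b < 0) :
    (|b| - |a|) / (|b| + |a|) = (a + b) / (b - a) := by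
  rcases mul_neg_iff.1 hab with ⟨ha, hb⟩ | ⟨ha, hb⟩
  · rw [abs_of_pos ha, abs_of_neg hb, ← neg_div_neg_eq]
    congr 1 <;> ring
  · rw [abs_of_neg ha, abs_of_pos hb]
    congr 1 <;> ring

theorem smul_add_smul_eq_inv_smul_sub_of_mul_neg {M : Type*} [AddCommGroup M] [Module K M] {a b : K}
    (hab : a * b < 0) (u v : M) :
    ((1 - (|b| - |a|) / (|b| + |a|)) / 2) • v + ((1 + (|b| - |a|) / (|b| + |a|)) / 2) • u
      = (a - b)⁻¹ • (a • v - b • u) := by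
  have hba : b - a ≠ 0 := sub_ne_zero.2 fun h => (h ▸ hab).not_ge (mul_self_nonneg a)
  have hab' : a - b ≠ 0 := neg_sub b a ▸ neg_ne_zero.2 hba
  rw [abs_sub_abs_div_abs_add_abs_of_mul_neg hab]
  have weight_v : (1 - (a + b) / (b - a)) / 2 = (a - b)⁻¹ * a := by
    field_simp
    ring
  have weight_u : (1 + (a + b) / (b - a)) / 2 = -((a - b)⁻¹ * b) := by
    field_simp
    ring
  rw [weight_v, weight_u, smul_sub, smul_smul, smul_smul, neg_smul, ← sub_eq_add_neg]

end ConvexWeights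

section ProductAtZero

variable {𝕜 E F : Type*} [NontriviallyNormedField 𝕜] [NormedAddCommGroup E] [NormedSpace 𝕜 E]
  [NormedAddCommGroup F] [NormedSpace 𝕜 F]

theorem hasFDerivAt_smul_of_eq_zero {c : E → 𝕜} {g : E → F} {g' : E →L[𝕜] F}
    {x : E} (hc : ContinuousAt c x) (hg : HasFDerivAt g g' x) (hgx : g x = 0) :
    HasFDerivAt (fun y => c y • g y) (c x • g') x := by
  have hg_remainder : (fun y => c y • (g y - g' (y - x))) =o[𝓝 x] fun y => y - x := by
    simpa [hgx] using (hc.isBigO_one 𝕜).smul_isLittleO hg.isLittleO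
  have hc_increment : (fun y => (c y - c x) • g' (y - x)) =o[𝓝 x] fun y => y - x := by
    have hc_small : (fun y => c y - c x) =o[𝓝 x] fun _ => (1 : 𝕜) :=
      (isLittleO_one_iff 𝕜).2 (tendsto_sub_nhds_zero_iff.2 hc)
    simpa using hc_small.smul_isBigO (g'.isBigO_sub (𝓝 x) x)
  refine .of_isLittleO ((hg_remainder.add hc_increment).congr_left fun y => ?_)
  simp only [hgx, smul_zero, sub_zero, smul_sub, sub_smul, smul_apply]
  abel

theorem fderiv_apply_eq_of_sub_eventuallyEq_smul {V W g : E → F} {c : E → 𝕜} {x v : E}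
    (hV : DifferentiableAt 𝕜 V x) (hg : DifferentiableAt 𝕜 g x) (hc : ContinuousAt c x)
    (hVW : ∀ᶠ y in 𝓝 x, V y - W y = c y • g y) (hgx : g x = 0) (hv : fderiv 𝕜 g x v = 0) :
    fderiv 𝕜 W x v = fderiv 𝕜 V x v := by
  have hW_eq : W =ᶠ[𝓝 x] fun y => V y - c y • g y := by
    filter_upwards [hVW] with y hy
    rw [← hy, sub_sub_cancel]
  have hW : HasFDerivAt W (fderiv 𝕜 V x - c x • fderiv 𝕜 g x) x :=
    (hV.hasFDerivAt.sub (hasFDerivAt_smul_of_eq_zero hc hg.hasFDerivAt hgx)).congr_of_eventuallyEq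
      hW_eq
  simp [hW.fderiv, hv]

end ProductAtZero

section EuclideanSpace

variable {𝕜 E ι : Type*} [RCLike 𝕜] [NormedAddCommGroup E] [NormedSpace 𝕜 E]

theorem fderiv_euclideanSpace_apply [Finite ι] {f : E → EuclideanSpace 𝕜 ι} {x : E}
    (hf : DifferentiableAt 𝕜 f x) (v : E) (i : ι) :
    fderiv 𝕜 f x v i = fderiv 𝕜 (fun y => f y i) x v := by
  have hfi : HasFDerivAt (fun y => f y i) (PiLp.proj 2 _ i ∘L fderiv 𝕜 f x) x :=
    hasFDerivWithinAt_univ.1 (hasFDerivWithinAt_euclidean.1 hf.hasFDerivAt.hasFDerivWithinAt i)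
  rw [hfi.fderiv]
  rfl

theorem fderiv_euclideanSpace_pair {g h : E → 𝕜} {x : E} (hg : DifferentiableAt 𝕜 g x)
    (hh : DifferentiableAt 𝕜 h x) (v : E) :
    fderiv 𝕜 (fun y => !₂[g y, h y]) x v = !₂[fderiv 𝕜 g x v, fderiv 𝕜 h x v] := by
  have hgh : DifferentiableAt 𝕜 (fun y => !₂[g y, h y]) x :=
    differentiableAt_euclidean.2 (Fin.forall_fin_two.2 ⟨hg, hh⟩)
  ext i
  rw [fderiv_euclideanSpace_apply hgh]
  fin_cases i <;> rfl

theorem norm_euclideanSpace_zero_pair (r : 𝕜) : ‖!₂[0, r]‖ = ‖r‖ := by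
  simp [EuclideanSpace.norm_eq]

end EuclideanSpace

section NormedSpace

variable {E : Type*} [NormedAddCommGroup E] [NormedSpace ℝ E]

/-- The Lie derivative `𝓛_f h` of a scalar function `h` along a vector field `f`, over an arbitrary
real normed space; `lieIter` iterates it on `ℝⁿ`. Where `h` is not differentiable its value
is `0`. -/
noncomputable def lieDeriv (f : E → E) (h : E → ℝ) (x : E) : ℝ :=
  fderiv ℝ h x (f x)

theorem differentiableAt_lieDeriv {f : E → E} {h : E → ℝ} {x : E}
    (hf : DifferentiableAt ℝ f x) (hh : ContDiffAt ℝ 2 h x) :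
    DifferentiableAt ℝ (lieDeriv f h) x :=
  ((hh.fderiv_right (m := 1) le_rfl).differentiableAt one_ne_zero).clm_apply hf

/-- The map `η = (H, 𝓛_f H)` into the Euclidean plane, whose zero set is the tangency surface
when `f` is one of the two fields of a second-order system. -/
noncomputable def tangencyMap (f : E → E) (H : E → ℝ) (x : E) : EuclideanSpace ℝ (Fin 2) :=
  !₂[H x, lieDeriv f H x]

theorem norm_fderiv_tangencyMap {f : E → E} {H : E → ℝ} {x v : E}
    (hf : DifferentiableAt ℝ f x) (hH : ContDiffAt ℝ 2 H x) (hv : fderiv ℝ H x v = 0) :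
    ‖fderiv ℝ (tangencyMap f H) x v‖ = |fderiv ℝ (lieDeriv f H) x v| := by
  have hdη : fderiv ℝ (tangencyMap f H) x v = !₂[fderiv ℝ H x v, fderiv ℝ (lieDeriv f H) x v] :=
    fderiv_euclideanSpace_pair (hH.differentiableAt two_ne_zero) (differentiableAt_lieDeriv hf hH) v
  rw [hdη, hv, norm_euclideanSpace_zero_pair, Real.norm_eq_abs]

/-- The parameter `λ*` of the tangential sliding vector field for sliding on the zero set of `η`,
with the convention that it is `0` where `dη` annihilates both fields. -/
noncomputable def slidingParameter {F : Type*} [NormedAddCommGroup F] [NormedSpace ℝ F]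
    (η : E → F) (fL fR : E → E) (x : E) : ℝ :=
  (‖fderiv ℝ η x (fR x)‖ - ‖fderiv ℝ η x (fL x)‖) /
    (‖fderiv ℝ η x (fR x)‖ + ‖fderiv ℝ η x (fL x)‖)

/-- The tangential sliding vector field `f^tan`: the convex combination of `fR` and `fL` whose
weights, in Filippov's parametrization by `[-1, 1]`, are given by `slidingParameter`. -/
noncomputable def tangentialSlidingField {F : Type*} [NormedAddCommGroup F] [NormedSpace ℝ F]
    (η : E → F) (fL fR : E → E) (x : E) : E :=
  ((1 - slidingParameter η fL fR x) / 2) • fR x + ((1 + slidingParameter η fL fR x) / 2) • fL x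

/-- The second-order sliding vector field `f^T = (a f^R - b f^L) / (a - b)`, where `a` and `b` are
the second Lie derivatives of `H` along `fL` and `fR`. Where `a = b` its junk value is `0`. -/
noncomputable def secondOrderSlidingField (fL fR : E → E) (H : E → ℝ) (x : E) : E :=
  (lieDeriv fL (lieDeriv fL H) x - lieDeriv fR (lieDeriv fR H) x)⁻¹ •
    (lieDeriv fL (lieDeriv fL H) x • fR x - lieDeriv fR (lieDeriv fR H) x • fL x)

theorem tangential_sliding_eq_second_order_sliding_general {fL fR : E → E} {H α : E → ℝ} {x : E}
    (hfL : DifferentiableAt ℝ fL x) (hH : ContDiffAt ℝ 2 H x) (hα : ContinuousAt α x)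
    (hso : ∀ᶠ y in 𝓝 x, lieDeriv fL H y - lieDeriv fR H y = α y * H y)
    (hHx : H x = 0) (hVx : lieDeriv fL H x = 0)
    (hab : lieDeriv fL (lieDeriv fL H) x * lieDeriv fR (lieDeriv fR H) x < 0) :
    tangentialSlidingField (tangencyMap fL H) fL fR x = secondOrderSlidingField fL fR H x := by
  have hRx : lieDeriv fR H x = 0 := by simpa [hHx, hVx] using hso.self_of_nhds
  have hb : lieDeriv fR (lieDeriv fR H) x = fderiv ℝ (lieDeriv fL H) x (fR x) :=
    fderiv_apply_eq_of_sub_eventuallyEq_smul (differentiableAt_lieDeriv hfL hH)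
      (hH.differentiableAt two_ne_zero) hα hso hHx hRx
  have hnormL : ‖fderiv ℝ (tangencyMap fL H) x (fL x)‖ = |lieDeriv fL (lieDeriv fL H) x| :=
    norm_fderiv_tangencyMap hfL hH hVx
  have hnormR : ‖fderiv ℝ (tangencyMap fL H) x (fR x)‖ = |lieDeriv fR (lieDeriv fR H) x| :=
    hb ▸ norm_fderiv_tangencyMap hfL hH hRx
  rw [tangentialSlidingField, slidingParameter, hnormL, hnormR]
  exact smul_add_smul_eq_inv_smul_sub_of_mul_neg hab (fL x) (fR x)

end NormedSpace

/-- At a visible–visible or invisible–invisible tangency point of a second-order Filippov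
system, the tangential sliding vector field of Carvalho et al. (defined via `λ*` with the
Euclidean norm of `dη(x)` applied to the two vector fields, where `η = (H, V)`) coincides
with the second-order sliding vector field `f^T(x) = (a·f^R(x) − b·f^L(x))/(a − b)`. -/
theorem tangential_sliding_eq_second_order_sliding {n : ℕ}
    (fL fR : EuclideanSpace ℝ (Fin n) → EuclideanSpace ℝ (Fin n))
    (H : EuclideanSpace ℝ (Fin n) → ℝ) (α : EuclideanSpace ℝ (Fin n) → ℝ)
    (hfL : ContDiff ℝ 1 fL) (hfR : ContDiff ℝ 1 fR) (hH : ContDiff ℝ 2 H)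
    (hα : ContDiff ℝ 1 α)
    (hso : ∀ x, lieIter fL H 1 x - lieIter fR H 1 x = α x * H x)
    (x : EuclideanSpace ℝ (Fin n)) (hHx : H x = 0) (hVx : lieIter fL H 1 x = 0)
    (a b : ℝ) (ha : a = lieIter fL H 2 x) (hb : b = lieIter fR H 2 x)
    (hab : a * b < 0)
    (η : EuclideanSpace ℝ (Fin n) → EuclideanSpace ℝ (Fin 2))
    (hη : ∀ y, η y = (WithLp.equiv 2 (Fin 2 → ℝ)).symm ![H y, lieIter fL H 1 y])
    (lam : ℝ)
    (hlam : lam = (‖fderiv ℝ η x (fR x)‖ - ‖fderiv ℝ η x (fL x)‖) /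
      (‖fderiv ℝ η x (fR x)‖ + ‖fderiv ℝ η x (fL x)‖)) :
    ((1 - lam) / 2) • fR x + ((1 + lam) / 2) • fL x
      = (a - b)⁻¹ • (a • fR x - b • fL x) := by
  obtain rfl : η = tangencyMap fL H := funext hη
  subst ha hb hlam
  exact tangential_sliding_eq_second_order_sliding_general
    (hfL.differentiable one_ne_zero x) hH.contDiffAt hα.continuous.continuousAt
    (.of_forall hso) hHx hVx hab
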